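/- arXiv:1801.10072 — 5 statements merged into one kernel-verified Lean document; each statement's English description precedes it below -/
import Mathlib

section
/- The integer sine depends only on the angle and not on the choice of points on its rays: let A, B, C ∈ ℤ² be pairwise distinct and not collinear, and let A', C' ∈ ℤ² satisfy A' − B = s·(A − B) and C' − B = t·(C − B) for some positive real numbers s, t. Then |det(A'−B, C'−B)| / (ll(BA')·ll(BC')) = |det(A−B, C−B)| / (ll(BA)·ll(BC)). -/
/-- The integer length of the segment `PQ` between two lattice points: the number of lattice
points in the open segment plus one, equivalently the gcd of the coordinates of `Q - P`. -/
def llen (P Q : ℤ × ℤ) : ℕ := Int.gcd (Q.1 - P.1) (Q.2 - P.2)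

/-- The determinant of the 2×2 matrix with columns `u` and `v`. -/
def det2 (u v : ℤ × ℤ) : ℤ := u.1 * v.2 - u.2 * v.1

/-- The integer sine of the angle `∠ABC`. -/
noncomputable def lsin (A B C : ℤ × ℤ) : ℚ :=
  (|det2 (A - B) (C - B)| : ℚ) / ((llen A B : ℚ) * (llen B C : ℚ))

lemma gcd_scale_aux (x y x' y' : ℤ) (s : ℝ) (hs : 0 < s)
    (h1 : (x' : ℝ) = s * x) (h2 : (y' : ℝ) = s * y) (hx : x ≠ 0) :
    ((Int.gcd x' y' : ℕ) : ℝ) = s * (Int.gcd x y : ℕ) := by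
  have hc : x' * y = x * y' := by
    have : (x' : ℝ) * y = x * y' := by rw [h1, h2]; ring
    exact_mod_cast this
  have e : x'.natAbs * Int.gcd x y = x.natAbs * Int.gcd x' y' := by
    rw [← Int.gcd_mul_left, ← Int.gcd_mul_left, hc, mul_comm x' x]
  have e' : |(x' : ℝ)| * (Int.gcd x y : ℕ) = |(x : ℝ)| * (Int.gcd x' y' : ℕ) := by
    have := congrArg (Nat.cast : ℕ → ℝ) e
    push_cast [Nat.cast_natAbs] at this
    exact this
  rw [h1, abs_mul, abs_of_pos hs] at e'
  have hx' : |(x : ℝ)| ≠ 0 := abs_ne_zero.mpr (by exact_mod_cast hx)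
  apply mul_left_cancel₀ hx'
  linarith

lemma gcd_scale (x y x' y' : ℤ) (s : ℝ) (hs : 0 < s)
    (h1 : (x' : ℝ) = s * x) (h2 : (y' : ℝ) = s * y) :
    ((Int.gcd x' y' : ℕ) : ℝ) = s * (Int.gcd x y : ℕ) := by
  by_cases hx : x = 0
  · by_cases hy : y = 0
    · subst hx hy
      have a : x' = 0 := by simpa using h1
      have b : y' = 0 := by simpa using h2
      simp [a, b]
    · rw [Int.gcd_comm x' y', Int.gcd_comm x y]
      exact gcd_scale_aux y x y' x' s hs h2 h1 hy
  · exact gcd_scale_aux x y x' y' s hs h1 h2 hx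

/-- The integer sine depends only on the angle, not on the choice of points on its rays:
if `A' − B = s·(A − B)` and `C' − B = t·(C − B)` for positive reals `s, t`, then
`|det(A'−B, C'−B)| / (ll(BA')·ll(BC')) = |det(A−B, C−B)| / (ll(BA)·ll(BC))`. -/
theorem integer_sine_well_defined (A B C A' C' : ℤ × ℤ)
    (hAB : A ≠ B) (hBC : B ≠ C) (hAC : A ≠ C)
    (hncol : det2 (A - B) (C - B) ≠ 0)
    (s t : ℝ) (hs : 0 < s) (ht : 0 < t)
    (hA'1 : ((A'.1 - B.1 : ℤ) : ℝ) = s * ((A.1 - B.1 : ℤ) : ℝ))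
    (hA'2 : ((A'.2 - B.2 : ℤ) : ℝ) = s * ((A.2 - B.2 : ℤ) : ℝ))
    (hC'1 : ((C'.1 - B.1 : ℤ) : ℝ) = t * ((C.1 - B.1 : ℤ) : ℝ))
    (hC'2 : ((C'.2 - B.2 : ℤ) : ℝ) = t * ((C.2 - B.2 : ℤ) : ℝ)) :
    lsin A' B C' = lsin A B C := by
  have gA : ((llen A' B : ℕ) : ℝ) = s * (llen A B : ℕ) := by
    unfold llen
    refine gcd_scale _ _ _ _ s hs ?_ ?_
    · push_cast at hA'1 ⊢; linarith
    · push_cast at hA'2 ⊢; linarith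
  have gC : ((llen B C' : ℕ) : ℝ) = t * (llen B C : ℕ) :=
    gcd_scale _ _ _ _ t ht hC'1 hC'2
  have hd : ((det2 (A' - B) (C' - B) : ℤ) : ℝ) = s * t * (det2 (A - B) (C - B) : ℤ) := by
    simp only [det2, Prod.fst_sub, Prod.snd_sub]
    rw [Int.cast_sub, Int.cast_mul, Int.cast_mul, hA'1, hA'2, hC'1, hC'2]
    push_cast; ring
  have key : ((lsin A' B C' : ℚ) : ℝ) = (lsin A B C : ℚ) := by
    unfold lsin
    push_cast
    rw [gA, gC, hd, abs_mul, abs_of_pos (mul_pos hs ht), mul_mul_mul_comm s]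
    exact mul_div_mul_left _ _ (mul_pos hs ht).ne'
  exact_mod_cast key
end

section
/- Klein's theorem for the lower sail: let ω > 0 be an irrational real number with continued fraction expansion ω = [a₀; a₁, a₂, …] and convergents pₖ/qₖ. Then the set of extreme points of the convex hull of the set S = {(x, y) ∈ ℤ² : x > 0, 0 ≤ y ≤ ωx} is exactly {(1, 0)} ∪ {(q₂ₖ, p₂ₖ) : k ≥ 0}, i.e. the sail vertices of the angle between the positive x-axis and the ray y = ωx (x > 0) are the even-index convergents. -/
/-- `a` is the sequence of partial quotients of the (regular) continued fraction expansion
`ω = [a₀; a₁, a₂, …]`: there is a sequence of complete quotients `w` with `w 0 = ω`,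
`aₙ = ⌊wₙ⌋` and `wₙ₊₁ = 1/(wₙ − aₙ)`. -/
def IsCFExpansion (ω : ℝ) (a : ℕ → ℤ) : Prop :=
  ∃ w : ℕ → ℝ, w 0 = ω ∧ ∀ n, a n = ⌊w n⌋ ∧ w (n + 1) = 1 / (w n - (a n : ℝ))

/-- `p k / q k` are the convergents of the continued fraction with partial quotients `a`:
`p₋₁ = 1, q₋₁ = 0, p₋₂ = 0, q₋₂ = 1` and `pₖ = aₖpₖ₋₁ + pₖ₋₂`, `qₖ = aₖqₖ₋₁ + qₖ₋₂`
(spelled out for `k = 0, 1` to avoid negative indices). -/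
def IsConvergents (a : ℕ → ℤ) (p q : ℕ → ℤ) : Prop :=
  p 0 = a 0 ∧ q 0 = 1 ∧ p 1 = a 1 * a 0 + 1 ∧ q 1 = a 1 ∧
    ∀ k : ℕ, p (k + 2) = a (k + 2) * p (k + 1) + p k ∧
      q (k + 2) = a (k + 2) * q (k + 1) + q k

/-- The lattice points of the angle. -/
def kleinS (ω : ℝ) : Set (ℝ × ℝ) := {v : ℝ × ℝ | ∃ x y : ℤ,
        v = ((x : ℝ), (y : ℝ)) ∧ 0 < x ∧ 0 ≤ y ∧ (y : ℝ) ≤ ω * (x : ℝ)}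

/-- A linear functional bounded below by `c` on `S` is so on the hull. -/
lemma klein_hull_ge (S : Set (ℝ × ℝ)) (s t c : ℝ) (h : ∀ v ∈ S, c ≤ s * v.1 + t * v.2) :
    ∀ v ∈ convexHull ℝ S, c ≤ s * v.1 + t * v.2 := by
  intro v hv
  have hc : Convex ℝ {v : ℝ × ℝ | c ≤ s * v.1 + t * v.2} := by
    intro x hx y hy m n hm hn hmn
    simp only [Set.mem_setOf_eq, Prod.fst_add, Prod.snd_add, Prod.smul_fst, Prod.smul_snd,
      smul_eq_mul] at *
    have : c = m * c + n * c := by rw [← add_mul, hmn, one_mul]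
    nlinarith [mul_le_mul_of_nonneg_left hx hm, mul_le_mul_of_nonneg_left hy hn]
  exact convexHull_min h hc hv

/-- Two independent supporting functionals give an extreme point. -/
lemma klein_extreme_of (S : Set (ℝ × ℝ)) (v : ℝ × ℝ) (hv : v ∈ S) (s t s2 t2 : ℝ)
    (h : ∀ u ∈ S, s * v.1 + t * v.2 ≤ s * u.1 + t * u.2)
    (h' : ∀ u ∈ S, s2 * v.1 + t2 * v.2 ≤ s2 * u.1 + t2 * u.2)
    (hd : s * t2 - s2 * t ≠ 0) : v ∈ Set.extremePoints ℝ (convexHull ℝ S) := by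
  refine ⟨subset_convexHull ℝ S hv, ?_⟩
  intro x hx y hy hxy
  obtain ⟨m, n, hm, hn, hmn, hvv⟩ := hxy
  have a1 := klein_hull_ge S _ _ _ h x hx
  have a2 := klein_hull_ge S _ _ _ h y hy
  have b1 := klein_hull_ge S _ _ _ h' x hx
  have b2 := klein_hull_ge S _ _ _ h' y hy
  have e1 : m * x.1 + n * y.1 = v.1 := by rw [← hvv]; simp
  have e2 : m * x.2 + n * y.2 = v.2 := by rw [← hvv]; simp
  have key : ∀ s t : ℝ, s * v.1 + t * v.2 ≤ s * x.1 + t * x.2 →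
      s * v.1 + t * v.2 ≤ s * y.1 + t * y.2 → s * x.1 + t * x.2 = s * v.1 + t * v.2 := by
    intro s t h1 h2
    refine le_antisymm ?_ h1
    have h3 : m * (s * x.1 + t * x.2 - (s * v.1 + t * v.2)) +
      n * (s * y.1 + t * y.2 - (s * v.1 + t * v.2)) = 0 := by
      have : n = 1 - m := by linarith
      subst this
      linear_combination s * e1 + t * e2
    have h4 : 0 ≤ n * (s * y.1 + t * y.2 - (s * v.1 + t * v.2)) :=
      mul_nonneg hn.le (by linarith)
    by_contra hcon
    push Not at hcon
    have : 0 < m * (s * x.1 + t * x.2 - (s * v.1 + t * v.2)) := mul_pos hm (by linarith)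
    linarith
  have k1 := key s t a1 a2
  have k2 := key s2 t2 b1 b2
  ext
  · apply mul_left_cancel₀ hd
    linear_combination t2 * k1 - t * k2
  · apply mul_left_cancel₀ hd
    linear_combination s * k2 - s2 * k1

/-- A sum of two points of `S` is not extreme. -/
lemma klein_not_extreme_sum (ω : ℝ) (x y x' y' : ℤ) (hx : 0 < x) (hy : 0 ≤ y)
    (h : (y : ℝ) ≤ ω * x) (hx' : 0 < x') (hy' : 0 ≤ y') (h' : (y' : ℝ) ≤ ω * x') :
    (((x + x' : ℤ) : ℝ), ((y + y' : ℤ) : ℝ)) ∉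
      Set.extremePoints ℝ (convexHull ℝ (kleinS ω)) := by
  intro he
  have hxr : (0 : ℝ) < x := by exact_mod_cast hx
  have hxr' : (0 : ℝ) < x' := by exact_mod_cast hx'
  have m1 : (((2 * x : ℤ) : ℝ), ((2 * y : ℤ) : ℝ)) ∈ convexHull ℝ (kleinS ω) :=
    subset_convexHull ℝ _ ⟨_, _, rfl, by omega, by omega, by push_cast; nlinarith⟩
  have m2 : (((2 * x' : ℤ) : ℝ), ((2 * y' : ℤ) : ℝ)) ∈ convexHull ℝ (kleinS ω) :=
    subset_convexHull ℝ _ ⟨_, _, rfl, by omega, by omega, by push_cast; nlinarith⟩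
  have m3 : ((x : ℝ), (y : ℝ)) ∈ convexHull ℝ (kleinS ω) :=
    subset_convexHull ℝ _ ⟨_, _, rfl, hx, hy, h⟩
  have e1 := he.2 m1 m2 ⟨1/2, 1/2, by norm_num, by norm_num, by norm_num, by
    ext <;> simp <;> ring⟩
  have e1a : x = x' := by
    have := congrArg Prod.fst e1
    simp only [Int.cast_inj] at this
    omega
  have e1b : y = y' := by
    have := congrArg Prod.snd e1
    simp only [Int.cast_inj] at this
    omega
  subst e1a e1b
  have m4 : (((3 * x : ℤ) : ℝ), ((3 * y : ℤ) : ℝ)) ∈ convexHull ℝ (kleinS ω) :=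
    subset_convexHull ℝ _ ⟨_, _, rfl, by omega, by omega, by push_cast; nlinarith⟩
  have e2 := he.2 m3 m4 ⟨1/2, 1/2, by norm_num, by norm_num, by norm_num, by
    ext <;> simp <;> ring⟩
  have := congrArg Prod.fst e2
  simp only [Int.cast_inj] at this
  omega

/-- Midpoint version. -/
lemma klein_not_extreme_mid (ω : ℝ) (x y u w : ℤ)
    (h1 : 0 < x - u ∧ 0 ≤ y - w ∧ ((y - w : ℤ) : ℝ) ≤ ω * ((x - u : ℤ) : ℝ))
    (h2 : 0 < x + u ∧ 0 ≤ y + w ∧ ((y + w : ℤ) : ℝ) ≤ ω * ((x + u : ℤ) : ℝ))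
    (hn : u ≠ 0 ∨ w ≠ 0) :
    ((x : ℝ), (y : ℝ)) ∉ Set.extremePoints ℝ (convexHull ℝ (kleinS ω)) := by
  intro he
  have m1 : (((x - u : ℤ) : ℝ), ((y - w : ℤ) : ℝ)) ∈ convexHull ℝ (kleinS ω) :=
    subset_convexHull ℝ _ ⟨_, _, rfl, h1⟩
  have m2 : (((x + u : ℤ) : ℝ), ((y + w : ℤ) : ℝ)) ∈ convexHull ℝ (kleinS ω) :=
    subset_convexHull ℝ _ ⟨_, _, rfl, h2⟩
  have e1 := he.2 m1 m2 ⟨1/2, 1/2, by norm_num, by norm_num, by norm_num, by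
    ext <;> simp <;> ring⟩
  have ea := congrArg Prod.fst e1
  have eb := congrArg Prod.snd e1
  simp only [Int.cast_inj] at ea eb
  omega

lemma klein_core (ω : ℝ) (hirr : Irrational ω) (A B X Y U W : ℕ → ℤ)
    (hX0 : X 0 = 1) (hY0 : Y 0 = 0) (hU0 : U 0 = 0) (hW0 : W 0 = 1)
    (hX : ∀ k, X (k + 1) = X k + A k * U k) (hY : ∀ k, Y (k + 1) = Y k + A k * W k)
    (hU : ∀ k, U (k + 1) = U k + B k * X (k + 1)) (hW : ∀ k, W (k + 1) = W k + B k * Y (k + 1))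
    (hA0 : 0 ≤ A 0) (hA : ∀ k, 1 ≤ A (k + 1)) (hB : ∀ k, 1 ≤ B k)
    (hV : ∀ k, (Y k : ℝ) < ω * X k) (hD : ∀ k, ω * U k < W k) :
    Set.extremePoints ℝ (convexHull ℝ (kleinS ω)) =
      {v : ℝ × ℝ | ∃ k : ℕ, v = ((X k : ℝ), (Y k : ℝ))} := by
  have hAn : ∀ k, 0 ≤ A k := by
    intro k
    cases k with
    | zero => exact hA0
    | succ k => linarith [hA k]
  have hpos : ∀ k, 0 < X k ∧ 0 ≤ Y k ∧ 0 ≤ U k ∧ 0 ≤ W k := by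
    intro k
    induction k with
    | zero => simp [hX0, hY0, hU0, hW0]
    | succ k ih =>
      obtain ⟨h1, h2, h3, h4⟩ := ih
      have g1 : 0 < X (k + 1) := by rw [hX]; have := mul_nonneg (hAn k) h3; omega
      have g2 : 0 ≤ Y (k + 1) := by rw [hY]; have := mul_nonneg (hAn k) h4; omega
      have hb : 0 ≤ B k := by linarith [hB k]
      refine ⟨g1, g2, ?_, ?_⟩
      · rw [hU]; have := mul_nonneg hb g1.le; omega
      · rw [hW]; have := mul_nonneg hb g2; omega
  have hdet : ∀ k, X k * W k - Y k * U k = 1 := by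
    intro k
    induction k with
    | zero => simp [hX0, hY0, hU0, hW0]
    | succ k ih =>
      rw [hU, hW, hX, hY]; linear_combination ih
  have hdet' : ∀ k, X (k + 1) * W k - Y (k + 1) * U k = 1 := by
    intro k
    rw [hX, hY]; linear_combination hdet k
  -- the functional is at least one on S
  have hL : ∀ k (x y : ℤ), 0 < x → (y : ℝ) ≤ ω * x → 1 ≤ W k * x - U k * y := by
    intro k x y hx hy
    have : (0 : ℝ) < W k * x - U k * y := by
      have hx' : (0 : ℝ) < x := by exact_mod_cast hx
      have hu : (0 : ℝ) ≤ U k := by exact_mod_cast (hpos k).2.2.1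
      nlinarith [mul_lt_mul_of_pos_right (hD k) hx', mul_le_mul_of_nonneg_left hy hu]
    have : (0 : ℤ) < W k * x - U k * y := by exact_mod_cast this
    omega
  have hVS : ∀ k, ((X k : ℝ), (Y k : ℝ)) ∈ kleinS ω := fun k =>
    ⟨_, _, rfl, (hpos k).1, (hpos k).2.1, (hV k).le⟩
  have hLv : ∀ k j, (X j * W k - Y j * U k = 1) → ∀ u ∈ kleinS ω,
      (W k : ℝ) * ((X j : ℝ), (Y j : ℝ)).1 + (-U k : ℝ) * ((X j : ℝ), (Y j : ℝ)).2 ≤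
        (W k : ℝ) * u.1 + (-U k : ℝ) * u.2 := by
    rintro k j hj u ⟨x, y, rfl, hx, hy, hxy⟩
    have h1 := hL k x y hx hxy
    have h2 : W k * X j + (-U k) * Y j ≤ W k * x + (-U k) * y := by linarith
    dsimp only
    exact_mod_cast h2
  apply Set.Subset.antisymm
  · intro v hv
    obtain ⟨x, y, rfl, hx, hy, hxy⟩ := extremePoints_convexHull_subset hv
    by_contra hno
    -- locate the cone
    have hM : ∀ k, X (k + 1) * y - Y (k + 1) * x =
        X k * y - Y k * x - A k * (W k * x - U k * y) := by
      intro k; rw [hX, hY]; ring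
    have hMb : ∀ k : ℕ, X (k + 1) * y - Y (k + 1) * x ≤ y - k := by
      intro k
      induction k with
      | zero =>
        rw [hM, hX0, hY0]
        have := mul_nonneg hA0 (le_trans zero_le_one (hL 0 x y hx hxy))
        push_cast; linarith
      | succ k ih =>
        rw [hM]
        have := hL (k + 1) x y hx hxy
        have h1 := hA k
        have : 1 ≤ A (k + 1) * (W (k + 1) * x - U (k + 1) * y) := by nlinarith
        push_cast; linarith
    have hex : ∃ k, X k * y - Y k * x < 0 := by
      refine ⟨y.toNat + 1 + 1, ?_⟩
      have := hMb (y.toNat + 1)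
      push_cast at this
      omega
    obtain ⟨k, hk0, hk1⟩ : ∃ k, 0 ≤ X k * y - Y k * x ∧ X (k + 1) * y - Y (k + 1) * x < 0 := by
      by_contra hcon
      push Not at hcon
      have : ∀ k, 0 ≤ X k * y - Y k * x := by
        intro k
        induction k with
        | zero => rw [hX0, hY0]; linarith
        | succ k ih => exact hcon k ih
      obtain ⟨k, hk⟩ := hex
      linarith [this k]
    rw [hM] at hk1
    have hα := hL k x y hx hxy
    obtain ⟨α, hαd⟩ : ∃ α, α = W k * x - U k * y := ⟨_, rfl⟩
    obtain ⟨β, hβd⟩ : ∃ β, β = X k * y - Y k * x := ⟨_, rfl⟩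
    rw [← hαd] at hα hk1
    rw [← hβd] at hk0 hk1
    have ex : x = α * X k + β * U k := by
      rw [hαd, hβd]; linear_combination (-x) * hdet k
    have ey : y = α * Y k + β * W k := by
      rw [hαd, hβd]; linear_combination (-y) * hdet k
    have hApos : 1 ≤ A k := by
      by_contra hc
      have : A k = 0 := by have := hAn k; omega
      rw [this] at hk1; linarith
    obtain ⟨p1, p2, p3, p4⟩ := hpos k
    have hS : ∀ γ δ : ℤ, 1 ≤ γ → 0 ≤ δ → δ ≤ A k * γ →
        0 < γ * X k + δ * U k ∧ 0 ≤ γ * Y k + δ * W k ∧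
        ((γ * Y k + δ * W k : ℤ) : ℝ) ≤ ω * ((γ * X k + δ * U k : ℤ) : ℝ) := by
      intro γ δ hγ hδ hle
      refine ⟨by nlinarith, by nlinarith [mul_nonneg (le_trans zero_le_one hγ) p2, mul_nonneg hδ p4], ?_⟩
      have hAr : (0 : ℝ) < A k := by exact_mod_cast hApos
      have f1 := hV k
      have f2 := hV (k + 1)
      rw [hX, hY] at f2
      push_cast at f2 ⊢
      have hδr : (0 : ℝ) ≤ δ := by exact_mod_cast hδ
      have hler : (0 : ℝ) ≤ A k * γ - δ := by
        have : 0 ≤ A k * γ - δ := by linarith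
        exact_mod_cast this
      have g1 := mul_le_mul_of_nonneg_left f1.le hler
      have g2 := mul_le_mul_of_nonneg_left f2.le hδr
      refine le_of_mul_le_mul_left ?_ hAr
      linarith
    rcases eq_or_lt_of_le hα with h1 | h1
    · rcases eq_or_lt_of_le hk0 with h2 | h2
      · apply hno
        refine ⟨k, ?_⟩
        rw [ex, ey, ← h1, ← h2]; simp
      · refine klein_not_extreme_mid ω x y (U k) (W k) ?_ ?_ ?_ hv
        · have := hS 1 (β - 1) le_rfl (by omega) (by rw [← h1] at hk1; omega)
          have e1 : x - U k = 1 * X k + (β - 1) * U k := by rw [ex, ← h1]; ring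
          have e2 : y - W k = 1 * Y k + (β - 1) * W k := by rw [ey, ← h1]; ring
          rw [e1, e2]; exact this
        · have := hS 1 (β + 1) le_rfl (by omega) (by rw [← h1] at hk1; omega)
          have e1 : x + U k = 1 * X k + (β + 1) * U k := by rw [ex, ← h1]; ring
          have e2 : y + W k = 1 * Y k + (β + 1) * W k := by rw [ey, ← h1]; ring
          rw [e1, e2]; exact this
        · by_contra hc
          push Not at hc
          have := hdet k
          rw [hc.1, hc.2] at this
          simp at this
    · by_cases hb : A k ≤ β
      · obtain ⟨s1, s2, s3⟩ := hS 1 (A k) le_rfl (by omega) (by omega)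
        obtain ⟨t1, t2, t3⟩ := hS (α - 1) (β - A k) (by omega) (by omega) (by linarith)
        have := klein_not_extreme_sum ω _ _ _ _ s1 s2 s3 t1 t2 t3
        apply this
        convert hv using 3
        · rw [ex]; ring
        · rw [ey]; ring
      · obtain ⟨s1, s2, s3⟩ := hS 1 0 le_rfl (by omega) (by omega)
        obtain ⟨t1, t2, t3⟩ := hS (α - 1) β (by omega) (by omega) (by nlinarith)
        have := klein_not_extreme_sum ω _ _ _ _ s1 s2 s3 t1 t2 t3
        apply this
        convert hv using 3
        · rw [ex]; ring
        · rw [ey]; ring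
  · rintro v ⟨k, rfl⟩
    cases k with
    | zero =>
      refine klein_extreme_of _ _ (hVS 0) _ _ 0 1 (hLv 0 0 (hdet 0)) ?_ ?_
      · rintro u ⟨x, y, rfl, hx, hy, hxy⟩
        have : (0 : ℝ) ≤ y := by exact_mod_cast hy
        simpa [hY0] using this
      · simp [hW0]
    | succ k =>
      refine klein_extreme_of _ _ (hVS (k + 1)) _ _ _ _ (hLv k (k + 1) (hdet' k))
        (hLv (k + 1) (k + 1) (hdet (k + 1))) ?_
      have h1 : W k * (-U (k + 1)) - W (k + 1) * (-U k) = - B k := by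
        rw [hU, hW]; linear_combination (- B k) * hdet' k
      have h2 : W k * (-U (k + 1)) - W (k + 1) * (-U k) ≠ 0 := by
        rw [h1]; have := hB k; omega
      exact_mod_cast h2

/-- Klein's theorem for the lower sail: for irrational `ω > 0`, the extreme points of the
convex hull of `S = {(x, y) ∈ ℤ² : x > 0, 0 ≤ y ≤ ωx}` are exactly `(1, 0)` together with
the even-index convergents `(q₂ₖ, p₂ₖ)`. -/
theorem klein_lower_sail (ω : ℝ) (hω : 0 < ω) (hirr : Irrational ω)
    (a p q : ℕ → ℤ) (hcf : IsCFExpansion ω a) (hconv : IsConvergents a p q) :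
    Set.extremePoints ℝ (convexHull ℝ {v : ℝ × ℝ | ∃ x y : ℤ,
        v = ((x : ℝ), (y : ℝ)) ∧ 0 < x ∧ 0 ≤ y ∧ (y : ℝ) ≤ ω * (x : ℝ)}) =
      {((1 : ℝ), (0 : ℝ))} ∪
        {v : ℝ × ℝ | ∃ k : ℕ, v = ((q (2 * k) : ℝ), (p (2 * k) : ℝ))} := by
  obtain ⟨w, hw0, hw⟩ := hcf
  obtain ⟨hp0, hq0, hp1, hq1, hpq⟩ := hconv
  have hwirr : ∀ n, Irrational (w n) := by
    intro n
    induction n with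
    | zero => rw [hw0]; exact hirr
    | succ n ih =>
      rw [(hw n).2, one_div]
      exact (ih.sub_intCast _).inv
  have hfr : ∀ n, 0 < w n - a n ∧ w n - a n < 1 := by
    intro n
    have h1 : (a n : ℝ) ≤ w n := by rw [(hw n).1]; exact Int.floor_le _
    have h2 : w n < a n + 1 := by rw [(hw n).1]; exact Int.lt_floor_add_one _
    have h3 : w n ≠ a n := (hwirr n).ne_int _
    exact ⟨sub_pos.2 (lt_of_le_of_ne h1 h3.symm), by linarith⟩
  have ha0 : 0 ≤ a 0 := by rw [(hw 0).1, hw0]; exact Int.floor_nonneg.2 hω.le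
  have ha : ∀ n, 1 ≤ a (n + 1) := by
    intro n
    rw [(hw (n + 1)).1, Int.le_floor, (hw n).2, Int.cast_one]
    exact (one_le_div (hfr n).1).2 (hfr n).2.le
  obtain ⟨X, Xz, Xs⟩ : ∃ X : ℕ → ℤ, X 0 = 1 ∧ ∀ j, X (j + 1) = q (2 * j) :=
    ⟨fun k => Nat.casesOn k 1 (fun j => q (2 * j)), rfl, fun _ => rfl⟩
  obtain ⟨Y, Yz, Ys⟩ : ∃ Y : ℕ → ℤ, Y 0 = 0 ∧ ∀ j, Y (j + 1) = p (2 * j) :=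
    ⟨fun k => Nat.casesOn k 0 (fun j => p (2 * j)), rfl, fun _ => rfl⟩
  obtain ⟨U, Uz, Us⟩ : ∃ U : ℕ → ℤ, U 0 = 0 ∧ ∀ j, U (j + 1) = q (2 * j + 1) :=
    ⟨fun k => Nat.casesOn k 0 (fun j => q (2 * j + 1)), rfl, fun _ => rfl⟩
  obtain ⟨W, Wz, Ws⟩ : ∃ W : ℕ → ℤ, W 0 = 1 ∧ ∀ j, W (j + 1) = p (2 * j + 1) :=
    ⟨fun k => Nat.casesOn k 1 (fun j => p (2 * j + 1)), rfl, fun _ => rfl⟩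
  have hX : ∀ k, X (k + 1) = X k + a (2 * k) * U k := by
    intro k
    cases k with
    | zero => simp [Xz, Xs, Uz, Us, hq0]
    | succ k => have := (hpq (2 * k)).2; simp only [Xz, Xs, Uz, Us]; rw [mul_add, mul_one, this]; ring
  have hY : ∀ k, Y (k + 1) = Y k + a (2 * k) * W k := by
    intro k
    cases k with
    | zero => simp [Yz, Ys, Wz, Ws, hp0]
    | succ k => have := (hpq (2 * k)).1; simp only [Yz, Ys, Wz, Ws]; rw [mul_add, mul_one, this]; ring
  have hU : ∀ k, U (k + 1) = U k + a (2 * k + 1) * X (k + 1) := by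
    intro k
    cases k with
    | zero => simp [Xz, Xs, Uz, Us, hq0, hq1]
    | succ k =>
      have := (hpq (2 * k + 1)).2
      simp only [Xz, Xs, Uz, Us]
      rw [show 2 * (k + 1) + 1 = 2 * k + 1 + 2 by ring, this]
      rw [show 2 * k + 1 + 1 = 2 * (k + 1) by ring]; ring
  have hW : ∀ k, W (k + 1) = W k + a (2 * k + 1) * Y (k + 1) := by
    intro k
    cases k with
    | zero => simp [Yz, Ys, Wz, Ws, hp0, hp1]; ring
    | succ k =>
      have := (hpq (2 * k + 1)).1
      simp only [Yz, Ys, Wz, Ws]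
      rw [show 2 * (k + 1) + 1 = 2 * k + 1 + 2 by ring, this]
      rw [show 2 * k + 1 + 1 = 2 * (k + 1) by ring]; ring
  have hN : ∀ k : ℕ, ω * (U k : ℝ) < (W k : ℝ) ∧
      ω * (X k : ℝ) - (Y k : ℝ) = w (2 * k) * ((W k : ℝ) - ω * (U k : ℝ)) := by
    intro k
    induction k with
    | zero => simp [Xz, Xs, Yz, Ys, Uz, Us, Wz, Ws, hw0]
    | succ k ih =>
      obtain ⟨i1, i2⟩ := ih
      have g1 : ω * X (k + 1) - Y (k + 1) = (w (2 * k) - a (2 * k)) * (W k - ω * U k) := by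
        rw [hX, hY]; push_cast; linear_combination i2
      have f1 := hfr (2 * k)
      have f2 := hfr (2 * k + 1)
      have w1 : w (2 * k + 1) * (w (2 * k) - a (2 * k)) = 1 := by
        rw [(hw (2 * k)).2]; exact one_div_mul_cancel f1.1.ne'
      have w2 : w (2 * (k + 1)) * (w (2 * k + 1) - a (2 * k + 1)) = 1 := by
        rw [show 2 * (k + 1) = 2 * k + 1 + 1 by ring, (hw (2 * k + 1)).2]
        exact one_div_mul_cancel f2.1.ne'
      have g2 : (0 : ℝ) < ω * X (k + 1) - Y (k + 1) := by
        rw [g1]; exact mul_pos f1.1 (by linarith)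
      have g3 : (W k : ℝ) - ω * U k = w (2 * k + 1) * (ω * X (k + 1) - Y (k + 1)) := by
        rw [g1]; linear_combination (-((W k : ℝ) - ω * (U k : ℝ))) * w1
      have g4 : (W (k + 1) : ℝ) - ω * U (k + 1) =
          (w (2 * k + 1) - a (2 * k + 1)) * (ω * X (k + 1) - Y (k + 1)) := by
        rw [hU, hW]; push_cast; linear_combination g3
      refine ⟨?_, ?_⟩
      · have := mul_pos f2.1 g2
        linarith
      · rw [g4]; linear_combination (-(ω * (X (k + 1) : ℝ) - (Y (k + 1) : ℝ))) * w2
  have hwpos : ∀ n, 0 < w n := by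
    intro n
    have h0 : 0 ≤ a n := by
      cases n with
      | zero => exact ha0
      | succ n => linarith [ha n]
    have : (0 : ℝ) ≤ a n := by exact_mod_cast h0
    linarith [(hfr n).1]
  have hmain := klein_core ω hirr (fun k => a (2 * k)) (fun k => a (2 * k + 1)) X Y U W
    Xz Yz Uz Wz hX hY hU hW ha0 (fun k => ha (2 * k + 1)) (fun k => ha (2 * k))
    (fun k => by
      have h1 := (hN k).2
      have h2 := mul_pos (hwpos (2 * k)) (sub_pos.2 (hN k).1)
      linarith) (fun k => (hN k).1)
  refine hmain.trans ?_
  ext v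
  simp only [Set.mem_setOf_eq, Set.mem_union, Set.mem_singleton_iff]
  constructor
  · rintro ⟨k, rfl⟩
    cases k with
    | zero => left; simp [Xz, Xs, Yz, Ys]
    | succ k => right; exact ⟨k, by rw [Xs, Ys]⟩
  · rintro (rfl | ⟨k, rfl⟩)
    · exact ⟨0, by simp [Xz, Xs, Yz, Ys]⟩
    · exact ⟨k + 1, by rw [Xs, Ys]⟩
end

section
/- The LLS sequence of the Klein sail equals the continued fraction of ω: let ω > 1 be irrational with continued fraction expansion ω = [a₀; a₁, a₂, …] and convergents pₖ/qₖ, and define the sail vertices A₋₁ = (1, 0) and Aₖ = (q₂ₖ, p₂ₖ) for k ≥ 0. Then for every k ≥ 0: (i) the integer length ll(Aₖ₋₁Aₖ) equals a₂ₖ, and (ii) the integer sine lsin∠Aₖ₋₁AₖAₖ₊₁ equals a₂ₖ₊₁. -/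
lemma cf_pos (ω : ℝ) (hω : 1 < ω) (hirr : Irrational ω) (a : ℕ → ℤ)
    (hcf : IsCFExpansion ω a) : ∀ n, 1 ≤ a n := by
  obtain ⟨w, h0, hw⟩ := hcf
  have key : ∀ n, 1 < w n ∧ Irrational (w n) := by
    intro n
    induction n with
    | zero => rw [h0]; exact ⟨hω, hirr⟩
    | succ n ih =>
      obtain ⟨h1, h2⟩ := ih
      obtain ⟨ha, hs⟩ := hw n
      have hi : Irrational (w n - (a n : ℝ)) := h2.sub_intCast (a n)
      have hle : (a n : ℝ) ≤ w n := by rw [ha]; exact Int.floor_le _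
      have hlt : w n < (a n : ℝ) + 1 := by rw [ha]; exact Int.lt_floor_add_one _
      have hne : w n - (a n : ℝ) ≠ 0 := hi.ne_zero
      have hpos : 0 < w n - (a n : ℝ) := lt_of_le_of_ne (by linarith) hne.symm
      rw [hs]
      refine ⟨?_, ?_⟩
      · rw [lt_div_iff₀ hpos]; linarith
      · rw [one_div]; exact hi.inv
  intro n
  rw [(hw n).1, Int.le_floor]
  exact_mod_cast (key n).1.le

lemma llen_of_dir (B C : ℤ × ℤ) (c x y z t : ℤ) (hc : 1 ≤ c)
    (h1 : C.1 - B.1 = c * x) (h2 : C.2 - B.2 = c * y) (hd : |x * t - y * z| = 1) :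
    (llen B C : ℤ) = c := by
  have hco : IsCoprime x y := by
    rcases (abs_eq (by norm_num)).1 hd with h | h
    · exact ⟨t, -z, by linarith⟩
    · exact ⟨-t, z, by linarith⟩
  have := Int.isCoprime_iff_gcd_eq_one.1 hco
  unfold llen
  rw [h1, h2, Int.gcd_mul_left, this]
  simp only [mul_one, Int.natCast_natAbs]
  exact abs_of_pos (by omega)

/-- The LLS sequence of the Klein sail equals the continued fraction of `ω`: with sail
vertices `A₋₁ = (1,0)`, `Aₖ = (q₂ₖ, p₂ₖ)` (here `A (k+1)` stands for `Aₖ`), for every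
`k ≥ 0` the integer length `ll(Aₖ₋₁Aₖ)` equals `a₂ₖ` and the integer sine
`lsin∠Aₖ₋₁AₖAₖ₊₁` equals `a₂ₖ₊₁`. -/
theorem lls_sequence_of_klein_sail (ω : ℝ) (hω : 1 < ω) (hirr : Irrational ω)
    (a p q : ℕ → ℤ) (hcf : IsCFExpansion ω a) (hconv : IsConvergents a p q)
    (A : ℕ → ℤ × ℤ) (hA0 : A 0 = (1, 0))
    (hA : ∀ k : ℕ, A (k + 1) = (q (2 * k), p (2 * k))) :
    ∀ k : ℕ, ((llen (A k) (A (k + 1)) : ℤ) = a (2 * k)) ∧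
      lsin (A k) (A (k + 1)) (A (k + 2)) = (a (2 * k + 1) : ℚ) := by
  have hpos := cf_pos ω hω hirr a hcf
  obtain ⟨hp0, hq0, hp1, hq1, hrec⟩ := hconv
  -- shifted sequences, starting at index -1
  obtain ⟨Q, hQ0, hQ⟩ : ∃ Q : ℕ → ℤ, Q 0 = 0 ∧ ∀ n, Q (n + 1) = q n :=
    ⟨fun n => Nat.casesOn n 0 q, rfl, fun _ => rfl⟩
  obtain ⟨P, hP0, hP⟩ : ∃ P : ℕ → ℤ, P 0 = 1 ∧ ∀ n, P (n + 1) = p n :=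
    ⟨fun n => Nat.casesOn n 1 p, rfl, fun _ => rfl⟩
  have hQr : ∀ n, Q (n + 2) = a (n + 1) * Q (n + 1) + Q n := by
    intro n
    cases n with
    | zero => simp [hQ, hQ0, hq0, hq1]
    | succ n => rw [hQ, hQ, hQ]; exact (hrec n).2
  have hPr : ∀ n, P (n + 2) = a (n + 1) * P (n + 1) + P n := by
    intro n
    cases n with
    | zero => simp [hP, hP0, hp0, hp1]
    | succ n => rw [hP, hP, hP]; exact (hrec n).1
  have hdet : ∀ n, |Q n * P (n + 1) - P n * Q (n + 1)| = 1 := by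
    intro n
    induction n with
    | zero => simp [hQ, hP, hQ0, hP0, hq0]
    | succ n ih =>
      rw [← ih, hQr, hPr, ← abs_neg]
      congr 1
      ring
  have hd1 : ∀ k, (A (k + 1)).1 - (A k).1 = a (2 * k) * Q (2 * k) := by
    intro k
    cases k with
    | zero => simp [hA, hA0, hQ0, hq0]
    | succ k =>
      have h := hQr (2 * k + 1)
      rw [hQ, hQ] at h
      rw [hA, hA]
      simp only [mul_add, mul_one] at *
      rw [hQ]; linarith [hQ (2 * k + 1), hQ (2 * k)]
  have hd2 : ∀ k, (A (k + 1)).2 - (A k).2 = a (2 * k) * P (2 * k) := by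
    intro k
    cases k with
    | zero => simp [hA, hA0, hP0, hp0]
    | succ k =>
      have h := hPr (2 * k + 1)
      rw [hP, hP] at h
      rw [hA, hA]
      simp only [mul_add, mul_one] at *
      rw [hP]; linarith [hP (2 * k + 1), hP (2 * k)]
  have hl : ∀ k, (llen (A k) (A (k + 1)) : ℤ) = a (2 * k) := fun k =>
    llen_of_dir _ _ _ _ _ _ _ (hpos _) (hd1 k) (hd2 k) (hdet (2 * k))
  intro k
  refine ⟨hl k, ?_⟩
  have e1 : ((llen (A k) (A (k + 1)) : ℕ) : ℚ) = (a (2 * k) : ℚ) := by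
    exact_mod_cast congrArg (Int.cast : ℤ → ℚ) (hl k)
  have e2 : ((llen (A (k + 1)) (A (k + 2)) : ℕ) : ℚ) = (a (2 * k + 2) : ℚ) := by
    exact_mod_cast congrArg (Int.cast : ℤ → ℚ) (hl (k + 1))
  have hD : |det2 (A k - A (k + 1)) (A (k + 2) - A (k + 1))|
      = a (2 * k) * a (2 * k + 2) * a (2 * k + 1) := by
    have f1 := hd1 k
    have f2 := hd2 k
    have g1 : (A (k + 2)).1 - (A (k + 1)).1 = a (2 * k + 2) * Q (2 * k + 2) := hd1 (k + 1)
    have g2 : (A (k + 2)).2 - (A (k + 1)).2 = a (2 * k + 2) * P (2 * k + 2) := hd2 (k + 1)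
    have f1' : (A k).1 - (A (k + 1)).1 = -(a (2 * k) * Q (2 * k)) := by linarith
    have f2' : (A k).2 - (A (k + 1)).2 = -(a (2 * k) * P (2 * k)) := by linarith
    have : det2 (A k - A (k + 1)) (A (k + 2) - A (k + 1))
        = -((a (2 * k) * a (2 * k + 2) * a (2 * k + 1))
          * (Q (2 * k) * P (2 * k + 1) - P (2 * k) * Q (2 * k + 1))) := by
      unfold det2
      simp only [Prod.fst_sub, Prod.snd_sub]
      rw [f1', f2', g1, g2, hQr, hPr]
      ring
    rw [this, abs_neg, abs_mul, hdet, mul_one]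
    have h0 := hpos (2 * k)
    have h1 := hpos (2 * k + 1)
    have h2 := hpos (2 * k + 2)
    exact abs_of_pos (by positivity)
  have hDq : |((det2 (A k - A (k + 1)) (A (k + 2) - A (k + 1)) : ℤ) : ℚ)|
      = (a (2 * k) : ℚ) * a (2 * k + 2) * a (2 * k + 1) := by
    rw [← Int.cast_abs, hD]; push_cast; ring
  have n0 : (a (2 * k) : ℚ) ≠ 0 := by
    have := hpos (2 * k)
    exact_mod_cast (by omega : a (2 * k) ≠ 0)
  have n2 : (a (2 * k + 2) : ℚ) ≠ 0 := by
    have := hpos (2 * k + 2)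
    exact_mod_cast (by omega : a (2 * k + 2) ≠ 0)
  unfold lsin
  rw [hDq, e1, e2]
  field_simp
end

section
/- Existence of the Conway river: let Q(x, y) = ax² + hxy + by² be a binary quadratic form with real coefficients that is indefinite (h² − 4ab > 0) and does not represent zero on the lattice, i.e. Q(x, y) ≠ 0 for every (x, y) ∈ ℤ² \ {(0, 0)}. Then there exists a ℤ-basis (u, v) of ℤ² with Q(u) > 0 and Q(v) < 0; equivalently, the topograph of Q contains an edge separating a positive and a negative value, so the Conway river of Q is nonempty. -/
/-- `(u, v)` is a ℤ-basis of the lattice ℤ²: every lattice vector is an integer linear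
combination of `u` and `v`. -/
def IsZBasis (u v : ℤ × ℤ) : Prop := ∀ w : ℤ × ℤ, ∃ m n : ℤ, w = m • u + n • v

theorem river_basis (u v : ℤ × ℤ) (e : ℤ) (he : e * e = 1) (hd : u.1 * v.2 - u.2 * v.1 = e) :
    IsZBasis u v := by
  intro w
  refine ⟨e * (w.1 * v.2 - w.2 * v.1), e * (u.1 * w.2 - u.2 * w.1), ?_⟩
  ext
  · simp only [Prod.fst_add, Prod.smul_fst, smul_eq_mul]
    linear_combination (-w.1) * he - e * w.1 * hd
  · simp only [Prod.snd_add, Prod.smul_snd, smul_eq_mul]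
    linear_combination (-w.2) * he - e * w.2 * hd

theorem river_descent (Q : ℤ × ℤ → ℝ) (hnz : ∀ v : ℤ × ℤ, v ≠ 0 → Q v ≠ 0)
    (hsq : ∀ (k : ℤ) (v : ℤ × ℤ), Q (k • v) = (k : ℝ) ^ 2 * Q v) (e : ℤ) (he : e * e = 1) :
    ∀ (N m n : ℕ), m + n ≤ N → ∀ u v : ℤ × ℤ, u.1 * v.2 - u.2 * v.1 = e → 0 < Q u → 0 < Q v →
    Q ((m : ℤ) • u + (n : ℤ) • v) < 0 →
    ∃ u v : ℤ × ℤ, u.1 * v.2 - u.2 * v.1 = e ∧ 0 < Q u ∧ Q v < 0 := by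
  intro N
  induction N with
  | zero =>
    intro m n hmn u v hd hu hv hw
    obtain rfl : m = 0 := by omega
    obtain rfl : n = 0 := by omega
    have := hsq 0 0
    simp at this hw
    linarith
  | succ N ih =>
    intro m n hmn u v hd hu hv hw
    rcases Nat.eq_zero_or_pos m with rfl | hm
    · simp only [Nat.cast_zero, zero_smul, zero_add, hsq] at hw
      have : 0 ≤ (((n : ℤ) : ℝ)) ^ 2 * Q v := by positivity
      linarith
    rcases Nat.eq_zero_or_pos n with rfl | hn
    · simp only [Nat.cast_zero, zero_smul, add_zero, hsq] at hw
      have : 0 ≤ (((m : ℤ) : ℝ)) ^ 2 * Q u := by positivity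
      linarith
    have hd1 : u.1 * (u + v).2 - u.2 * (u + v).1 = e := by
      simp only [Prod.fst_add, Prod.snd_add]; linear_combination hd
    have hd2 : (u + v).1 * v.2 - (u + v).2 * v.1 = e := by
      simp only [Prod.fst_add, Prod.snd_add]; linear_combination hd
    have hne : u + v ≠ 0 := by
      intro h0
      rw [h0] at hd1
      simp at hd1
      subst hd1
      simp at he
    rcases lt_or_gt_of_ne (hnz _ hne) with hs | hs
    · exact ⟨u, u + v, hd1, hu, hs⟩
    rcases le_total n m with hle | hle
    · obtain ⟨k, rfl⟩ := Nat.exists_eq_add_of_le hle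
      refine ih k n (by omega) u (u + v) hd1 hu hs ?_
      convert hw using 2
      push_cast
      module
    · obtain ⟨k, rfl⟩ := Nat.exists_eq_add_of_le hle
      refine ih m k (by omega) (u + v) v hd2 hs hv ?_
      convert hw using 2
      push_cast
      module

theorem river_pos (a h b : ℝ) (hind : 0 < h ^ 2 - 4 * a * b) (ha : 0 < a)
    (Q : ℤ × ℤ → ℝ)
    (hQ : ∀ v : ℤ × ℤ, Q v = a * (v.1 : ℝ) ^ 2 + h * (v.1 : ℝ) * (v.2 : ℝ) + b * (v.2 : ℝ) ^ 2)
    (hnz : ∀ v : ℤ × ℤ, v ≠ 0 → Q v ≠ 0) :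
    ∃ (u v : ℤ × ℤ) (e : ℤ), e * e = 1 ∧ u.1 * v.2 - u.2 * v.1 = e ∧ 0 < Q u ∧ Q v < 0 := by
  have hsq : ∀ (k : ℤ) (v : ℤ × ℤ), Q (k • v) = (k : ℝ) ^ 2 * Q v := by
    intro k v
    simp only [hQ, Prod.smul_fst, Prod.smul_snd, smul_eq_mul]
    push_cast
    ring
  -- a rational point where the form is negative
  obtain ⟨r, hr⟩ : ∃ r : ℚ, a * (r : ℝ) ^ 2 + h * r + b < 0 := by
    have hopen : IsOpen {t : ℝ | a * t ^ 2 + h * t + b < 0} :=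
      isOpen_lt (by fun_prop) (by fun_prop)
    have hmem : -h / (2 * a) ∈ {t : ℝ | a * t ^ 2 + h * t + b < 0} := by
      have : a * (-h / (2 * a)) ^ 2 + h * (-h / (2 * a)) + b = -(h ^ 2 - 4 * a * b) / (4 * a) := by
        field_simp
        ring
      simp only [Set.mem_ofPred_eq, this]
      exact div_neg_of_neg_of_pos (by linarith) (by linarith)
    obtain ⟨r, hr⟩ := Rat.denseRange_cast.exists_mem_open hopen ⟨_, hmem⟩
    exact ⟨r, hr⟩
  have hneg : Q (r.num, (r.den : ℤ)) < 0 := by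
    have hd : (0 : ℝ) < r.den := by exact_mod_cast r.den_pos
    have hn : (r.num : ℝ) = r * r.den := by exact_mod_cast (Rat.mul_den_eq_num r).symm
    rw [hQ]
    simp only [Int.cast_natCast, hn]
    have := mul_neg_of_neg_of_pos hr (pow_pos hd 2)
    linarith
  have h1 : 0 < Q (1, 0) := by simp [hQ, ha]
  have hm1 : 0 < Q (-1, 0) := by simp [hQ, ha]
  rcases lt_or_gt_of_ne (hnz (0, 1) (by simp)) with h2 | h2
  · exact ⟨(1, 0), (0, 1), 1, by simp, by simp, h1, h2⟩
  rcases le_total 0 r.num with hs | hs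
  · obtain ⟨u, v, hh⟩ := river_descent Q hnz hsq 1 (by simp) _ r.num.natAbs r.den le_rfl (1, 0) (0, 1)
      (by simp) h1 h2 (by simpa [abs_of_nonneg hs] using hneg)
    exact ⟨u, v, 1, by simp, hh⟩
  · obtain ⟨u, v, hh⟩ := river_descent Q hnz hsq (-1) (by simp) _ r.num.natAbs r.den le_rfl (-1, 0) (0, 1)
      (by simp) hm1 h2 (by simpa [abs_of_nonpos hs] using hneg)
    exact ⟨u, v, -1, by simp, hh⟩

/-- Existence of the Conway river: if `Q(x,y) = ax² + hxy + by²` is a real indefinite binary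
quadratic form (`h² − 4ab > 0`) not representing zero on `ℤ² \ {0}`, then there is a ℤ-basis
`(u, v)` of ℤ² with `Q(u) > 0` and `Q(v) < 0`, i.e. the topograph of `Q` contains an edge
separating a positive and a negative value, so the Conway river of `Q` is nonempty. -/
theorem conway_river_exists (a h b : ℝ) (hind : 0 < h ^ 2 - 4 * a * b)
    (Q : ℤ × ℤ → ℝ)
    (hQ : ∀ v : ℤ × ℤ, Q v = a * (v.1 : ℝ) ^ 2 + h * (v.1 : ℝ) * (v.2 : ℝ) + b * (v.2 : ℝ) ^ 2)
    (hnz : ∀ v : ℤ × ℤ, v ≠ 0 → Q v ≠ 0) :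
    ∃ u v : ℤ × ℤ, IsZBasis u v ∧ 0 < Q u ∧ Q v < 0 := by
  have ha : a ≠ 0 := by
    have := hnz (1, 0) (by simp)
    simpa [hQ] using this
  rcases lt_or_gt_of_ne ha with ha | ha
  · obtain ⟨u, v, e, he, hd, hu, hv⟩ := river_pos (-a) (-h) (-b) (by linarith) (by linarith)
      (fun w => - Q w) (fun w => by simp only [hQ]; ring) (fun w hw => neg_ne_zero.mpr (hnz w hw))
    exact ⟨v, u, river_basis v u (-e) (by linarith) (by linarith), by linarith, by linarith⟩
  · obtain ⟨u, v, e, he, hd, hu, hv⟩ := river_pos a h b hind ha Q hQ hnz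
    exact ⟨u, v, river_basis u v e he hd, hu, hv⟩
end

section
/- The modular group is the free product of cyclic groups of orders 2 and 3: the quotient PSL(2, ℤ) of the group SL(2, ℤ) of 2×2 integer matrices of determinant 1 by its center {I, −I} is isomorphic as a group to the free product (ℤ/2ℤ) * (ℤ/3ℤ). -/
namespace PSLProof

open Matrix ModularGroup

abbrev SL := Matrix.SpecialLinearGroup (Fin 2) ℤ
abbrev PSL := SL ⧸ Subgroup.center SL

/-- The homomorphism from a cyclic group given by an element killed by `n`. -/
def zhom {G : Type} [Group G] (n : ℕ) [NeZero n] (g : G) (hg : g ^ n = 1) :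
    Multiplicative (ZMod n) →* G where
  toFun x := g ^ (Multiplicative.toAdd x).val
  map_one' := by simp
  map_mul' x y := by
    rw [toAdd_mul, ZMod.val_add, ← pow_add]
    exact (pow_eq_pow_mod _ hg).symm

/-- The invariant `a * c` of the first column. -/
def q : PSL → ℤ := Quotient.lift (fun g : SL => g.1 0 0 * g.1 1 0) (by
  intro a b hab
  have h := QuotientGroup.leftRel_apply.mp hab
  obtain ⟨r, hr, h⟩ := Matrix.SpecialLinearGroup.mem_center_iff.mp h
  have hb : b = a * (a⁻¹ * b) := by group
  have hb' : b.1 = a.1 * Matrix.scalar (Fin 2) r := by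
    rw [h]; exact congrArg Subtype.val hb
  have hr' : r ^ 2 = 1 := by simpa using hr
  simp only [hb', Matrix.scalar_apply, Matrix.mul_diagonal]
  linear_combination (-(a.1 0 0 * a.1 1 0)) * hr')

def s : PSL := QuotientGroup.mk S
def u : PSL := QuotientGroup.mk (T * S)

lemma neg_one_mk : (QuotientGroup.mk (-1 : SL) : PSL) = 1 := by
  rw [QuotientGroup.eq_one_iff, Subgroup.mem_center_iff]
  intro g; simp

lemma s_pow : s ^ 2 = 1 := by
  rw [← neg_one_mk, s, ← QuotientGroup.mk_pow]
  congr 1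
  ext i j; fin_cases i <;> fin_cases j <;> simp [pow_two, coe_S, Matrix.mul_apply, Fin.sum_univ_two]

lemma u_pow : u ^ 3 = 1 := by
  rw [← neg_one_mk, u, ← QuotientGroup.mk_pow]
  congr 1
  ext i j
  fin_cases i <;> fin_cases j <;>
    simp [coe_S, coe_T, pow_succ, Matrix.mul_apply, Fin.sum_univ_two]

lemma q_s (x : PSL) (h : 0 < q x) : q (s * x) < 0 := by
  induction x using QuotientGroup.induction_on with
  | H g =>
    change 0 < g.1 0 0 * g.1 1 0 at h
    change (S * g : SL).1 0 0 * (S * g : SL).1 1 0 < 0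
    simp [coe_S, Matrix.mul_apply, Fin.sum_univ_two]
    linarith

lemma q_u (x : PSL) (h : q x < 0) : 0 < q (u * x) := by
  induction x using QuotientGroup.induction_on with
  | H g =>
    change g.1 0 0 * g.1 1 0 < 0 at h
    change 0 < (T * S * g : SL).1 0 0 * (T * S * g : SL).1 1 0
    simp [coe_S, coe_T, Matrix.mul_apply, Fin.sum_univ_two]
    nlinarith [sq_nonneg (g.1 0 0)]

lemma q_u2 (x : PSL) (h : q x < 0) : 0 < q (u ^ 2 * x) := by
  induction x using QuotientGroup.induction_on with
  | H g =>
    change g.1 0 0 * g.1 1 0 < 0 at h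
    change 0 < ((T * S) ^ 2 * g : SL).1 0 0 * ((T * S) ^ 2 * g : SL).1 1 0
    simp [coe_S, coe_T, pow_two, Matrix.mul_apply, Fin.sum_univ_two]
    nlinarith [sq_nonneg (g.1 1 0)]

abbrev nn (b : Bool) : ℕ := bif b then 2 else 3

instance (b : Bool) : NeZero (nn b) := ⟨by cases b <;> simp⟩

abbrev H (b : Bool) : Type := Multiplicative (ZMod (nn b))

def el (b : Bool) : PSL := bif b then s else u

lemma el_pow (b : Bool) : el b ^ nn b = 1 := by
  cases b
  · exact u_pow
  · exact s_pow

def f (b : Bool) : H b →* PSL := zhom (nn b) (el b) (el_pow b)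

def X (b : Bool) : Set PSL := bif b then {x | q x < 0} else {x | 0 < q x}

lemma f_inj : Function.Injective (Monoid.CoprodI.lift f) := by
  have hs : q (u * 1) = 1 := by
    change (T * S * 1 : SL).1 0 0 * (T * S * 1 : SL).1 1 0 = 1
    simp [coe_S, coe_T, Matrix.mul_apply, Fin.sum_univ_two]
  refine Monoid.CoprodI.lift_injective_of_ping_pong f ?_ X ?_ ?_ ?_
  · right
    refine ⟨false, ?_⟩
    have : Cardinal.mk (H false) = 3 := by
      change Cardinal.mk (ZMod 3) = 3
      simp
    rw [this]
  · intro b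
    cases b
    · exact ⟨u * 1, by change 0 < q _; omega⟩
    · exact ⟨s * (u * 1), q_s _ (by omega)⟩
  · intro a b hab
    rw [Function.onFun, Set.disjoint_left]
    cases a <;> cases b <;> simp_all [X] <;> intro x hx <;> omega
  · intro a b hab h hh
    rintro _ ⟨x, hx, rfl⟩
    cases a <;> cases b
    · exact absurd rfl hab
    · change ZMod 3 at h
      change h ≠ 0 at hh
      change q x < 0 at hx
      change 0 < q (u ^ h.val * x)
      have : h = 1 ∨ h = 2 := by clear hx; revert h; decide
      rcases this with rfl | rfl
      · have := q_u x hx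
        rwa [show ZMod.val (1 : ZMod 3) = 1 from rfl, pow_one]
      · exact q_u2 x hx
    · change ZMod 2 at h
      change h ≠ 0 at hh
      change 0 < q x at hx
      change q (s ^ h.val * x) < 0
      have : h = 1 := by clear hx; revert h; decide
      subst this
      have := q_s x hx
      rwa [show ZMod.val (1 : ZMod 2) = 1 from rfl, pow_one]
    · exact absurd rfl hab

abbrev C := Monoid.Coprod (Multiplicative (ZMod 2)) (Multiplicative (ZMod 3))

def phi : C →* Monoid.CoprodI H :=
  Monoid.Coprod.lift (Monoid.CoprodI.of (M := H) (i := true))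
    (Monoid.CoprodI.of (M := H) (i := false))

def psi : Monoid.CoprodI H →* C :=
  Monoid.CoprodI.lift (fun b => match b with
    | true => (Monoid.Coprod.inl : Multiplicative (ZMod 2) →* C)
    | false => (Monoid.Coprod.inr : Multiplicative (ZMod 3) →* C))

lemma psi_phi : psi.comp phi = MonoidHom.id C := by
  apply Monoid.Coprod.hom_ext
  · ext x
    change psi (phi (Monoid.Coprod.inl _)) = Monoid.Coprod.inl _
    rw [phi, Monoid.Coprod.lift_apply_inl, psi, Monoid.CoprodI.lift_of]
  · ext x
    change psi (phi (Monoid.Coprod.inr _)) = Monoid.Coprod.inr _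
    rw [phi, Monoid.Coprod.lift_apply_inr, psi, Monoid.CoprodI.lift_of]

lemma phi_inj : Function.Injective phi :=
  Function.LeftInverse.injective (g := psi) (fun x => DFunLike.congr_fun psi_phi x)

def F : C →* PSL := (Monoid.CoprodI.lift f).comp phi

lemma F_surj : Function.Surjective F := by
  have hs : s ∈ F.range := ⟨Monoid.Coprod.inl (Multiplicative.ofAdd 1), by
    rw [F, MonoidHom.comp_apply]
    rw [phi, Monoid.Coprod.lift_apply_inl, Monoid.CoprodI.lift_of]
    exact pow_one s⟩
  have hu : u ∈ F.range := ⟨Monoid.Coprod.inr (Multiplicative.ofAdd 1), by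
    rw [F, MonoidHom.comp_apply]
    rw [phi, Monoid.Coprod.lift_apply_inr, Monoid.CoprodI.lift_of]
    exact pow_one u⟩
  have ht : (QuotientGroup.mk T : PSL) ∈ F.range := by
    have : (QuotientGroup.mk T : PSL) = u * s⁻¹ := by
      rw [u, s, QuotientGroup.mk_mul, mul_inv_cancel_right]
    rw [this]
    exact mul_mem hu (inv_mem hs)
  have key : (⊤ : Subgroup SL) ≤ F.range.comap (QuotientGroup.mk' _) := by
    rw [← SpecialLinearGroup.SL2Z_generators, Subgroup.closure_le]
    rintro _ (rfl | rfl)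
    · exact hs
    · exact ht
  intro x
  induction x using QuotientGroup.induction_on with
  | H g => exact key (Subgroup.mem_top g)

end PSLProof

/-- The modular group is the free product of cyclic groups of orders 2 and 3:
`PSL(2, ℤ) = SL(2, ℤ)/{±I}` is isomorphic to `(ℤ/2ℤ) ∗ (ℤ/3ℤ)`. -/
theorem psl2z_iso_free_product_Z2_Z3 :
    Nonempty ((Matrix.SpecialLinearGroup (Fin 2) ℤ ⧸
        Subgroup.center (Matrix.SpecialLinearGroup (Fin 2) ℤ)) ≃*
      Monoid.Coprod (Multiplicative (ZMod 2)) (Multiplicative (ZMod 3))) := by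
  exact ⟨(MulEquiv.ofBijective PSLProof.F
    ⟨PSLProof.f_inj.comp PSLProof.phi_inj, PSLProof.F_surj⟩).symm⟩
end
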